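/- Let a and b be nonzero, multiplicatively independent integers. For real x ≥ 16 set ξ = log log x, and let U(x) be the set of primes p ≤ x such that p divides ab, or p ≤ ξ, or the ξ-smooth part of p−1 exceeds exp(√(log p)), or the ξ-rough part of p−1 is not squarefree, or ℓ_a(p) ≤ p^{1/2}/log p, or ℓ_b(p) ≤ p^{1/2}/log p, or ℓ_{a,b}(p) ≤ p^{2/3}/log p. Then there exist a constant C > 0 and x_0 (depending on a, b) such that for all x ≥ x_0 and all t with 2 ≤ t ≤ x, the number of primes in U(x) that are at most t is at most C·( log x/log log x + t/(log t)^{3/2} + t/(log t · log log x) ). -/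

import Mathlib

open scoped Classical

/-- The `z`-smooth part of `m`: its largest `z`-smooth divisor. -/
noncomputable def smoothPart (z : ℝ) (m : ℕ) : ℕ :=
  ∏ p ∈ m.primeFactors.filter (fun p : ℕ => (p : ℝ) ≤ z), p ^ m.factorization p

/-- The `z`-rough part of `m`: the cofactor of the `z`-smooth part. -/
noncomputable def roughPart (z : ℝ) (m : ℕ) : ℕ :=
  ∏ p ∈ m.primeFactors.filter (fun p : ℕ => z < (p : ℝ)), p ^ m.factorization p

/-- The order of the subgroup of `(ℤ/pℤ)ˣ` generated by the residues of `a` and `b`. -/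
noncomputable def ellPair (a b : ℤ) (p : ℕ) : ℕ :=
  Nat.card (Submonoid.closure ({(a : ZMod p), (b : ZMod p)} : Set (ZMod p)))

/-- Membership in the exceptional set `U(x)`: with `ξ = log log x`, the prime `p`
divides `ab`, or `p ≤ ξ`, or the `ξ`-smooth part of `p - 1` exceeds `exp(√(log p))`,
or the `ξ`-rough part of `p - 1` is not squarefree, or `ℓ_a(p) ≤ p^(1/2)/log p`, or
`ℓ_b(p) ≤ p^(1/2)/log p`, or `ℓ_{a,b}(p) ≤ p^(2/3)/log p`. -/
def UCond (a b : ℤ) (x : ℝ) (p : ℕ) : Prop :=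
  (p : ℤ) ∣ a * b ∨ (p : ℝ) ≤ Real.log (Real.log x) ∨
  Real.exp (Real.sqrt (Real.log p)) < (smoothPart (Real.log (Real.log x)) (p - 1) : ℝ) ∨
  ¬ Squarefree (roughPart (Real.log (Real.log x)) (p - 1)) ∨
  (orderOf ((a : ZMod p)) : ℝ) ≤ (p : ℝ) ^ ((1 : ℝ) / 2) / Real.log p ∨
  (orderOf ((b : ZMod p)) : ℝ) ≤ (p : ℝ) ^ ((1 : ℝ) / 2) / Real.log p ∨
  (ellPair a b p : ℝ) ≤ (p : ℝ) ^ ((2 : ℝ) / 3) / Real.log p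

/-!
Each way of belonging to `U(x)` is counted separately, and primes `p ≤ √t` are always negligible.

* If the `ξ`-rough part of `p - 1` is not squarefree, then `p ≡ 1 [MOD q²]` for a prime `q > ξ`.
  Primes `p ≡ c` modulo a power `Q` of `q` are counted in the manner of Chebyshev: those in
  `(M, Q * M]` have a product dividing `∏ (c + Q * j)` over `j < M`, which is also divisible by the
  coprime number obtained from `M!` by removing its factors `q`. Dividing out the latter leaves a
  power of `q` of the right size. Summing over `q > ξ` gives `t / (log t * ξ)`.
* A smooth part exceeding `exp √(log p)` is handled by Rankin's trick with exponent `3/4`, which is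
  strong enough as long as `ξ ≤ 2 log t`; otherwise `t` itself is `O(log x / log log x)`.
* If `r` independent integers generate a subgroup of order at most `y` modulo `p`, then by Matthews'
  pigeonhole argument two of their monomials with exponents up to about `y ^ (1 / r)` agree modulo
  `p`. So `p` divides one of few nonzero integers of controlled size, and each of these has few
  prime factors.
-/

section

open Finset
open Real (log exp sqrt)

/-! ### Primes in arithmetic progressions modulo prime powers -/

theorem sum_Ioc_div_sq_le {f : ℕ → ℝ} {c : ℝ} (hf : ∀ k, 0 ≤ f k)
    (hc : ∀ N, ∑ k ∈ Ioc 0 N, f k ≤ c * N) {n N : ℕ} (hn : 0 < n) (hnN : n ≤ N) :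
    ∑ k ∈ Ioc n N, f k / (k : ℝ) ^ 2 ≤ 2 * c / n := by
  have hc0 : 0 ≤ c := by simpa using (sum_nonneg fun k _ => hf k).trans (hc 1)
  have : (0 : ℝ) < n := by exact_mod_cast hn
  suffices h : ∑ k ∈ Ioc n N, f k / (k : ℝ) ^ 2 ≤
      (∑ k ∈ Ioc 0 N, f k) / (N : ℝ) ^ 2 + 2 * c * (1 / n - 1 / N) by
    have hN : (0 : ℝ) < N := by exact_mod_cast hn.trans_le hnN
    calc _ ≤ _ := h
      _ ≤ c * N / (N : ℝ) ^ 2 + 2 * c * (1 / n - 1 / N) := by gcongr; exact hc N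
      _ = 2 * c / n - c / N := by field_simp; ring
      _ ≤ 2 * c / n := sub_le_self _ (by positivity)
  induction N, hnN using Nat.le_induction with
  | base =>
    simp only [Ioc_self, sum_empty, sub_self, mul_zero, add_zero]
    exact div_nonneg (sum_nonneg fun k _ => hf k) (by positivity)
  | succ m hnm ih =>
    have hm : (0 : ℝ) < m := by exact_mod_cast hn.trans_le hnm
    rw [sum_Ioc_succ_top hnm, sum_Ioc_succ_top m.zero_le]
    set F := ∑ k ∈ Ioc 0 m, f k
    have hdecrease : F * (1 / (m : ℝ) ^ 2 - 1 / (m + 1) ^ 2) ≤ 2 * c * (1 / m - 1 / (m + 1)) := by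
      calc F * (1 / (m : ℝ) ^ 2 - 1 / (m + 1) ^ 2)
          ≤ c * m * (1 / (m : ℝ) ^ 2 - 1 / (m + 1) ^ 2) := by
            gcongr
            · rw [sub_nonneg]; gcongr; linarith
            · exact hc m
        _ = c * (1 / m - 1 / (m + 1)) * ((2 * m + 1) / (m + 1)) := by field_simp; ring
        _ ≤ c * (1 / m - 1 / (m + 1)) * 2 := by
            gcongr
            · refine mul_nonneg hc0 (sub_nonneg.2 ?_); gcongr; linarith
            · rw [div_le_iff₀ (by positivity)]; linarith
        _ = _ := by ring
    push_cast
    rw [add_div]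
    linear_combination ih + hdecrease

theorem sum_log_div_sq_le {z : ℝ} (hz : 0 < z) {Q : Finset ℕ}
    (hQ : ∀ q ∈ Q, q.Prime ∧ z < q) :
    ∑ q ∈ Q, log q / (q : ℝ) ^ 2 ≤ 4 * log 4 / z := by
  set f : ℕ → ℝ := fun k => if k.Prime then log k else 0
  set n := max 1 ⌊z⌋₊
  have hf : ∀ k, 0 ≤ f k := fun k => by
    dsimp only [f]; split_ifs <;> [exact Real.log_natCast_nonneg k; exact le_rfl]
  have hchebyshev : ∀ N, ∑ k ∈ Ioc 0 N, f k ≤ log 4 * N := fun N => by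
    rw [← sum_filter]
    simpa only [Chebyshev.theta, Nat.floor_natCast] using
      Chebyshev.theta_le_log4_mul_x (Nat.cast_nonneg N)
  have hnq : ∀ q ∈ Q, n < q := fun q hq =>
    max_lt (hQ q hq).1.one_lt ((Nat.floor_lt hz.le).2 (hQ q hq).2)
  have hzn : z ≤ 2 * n := by
    have h1 : (1 : ℝ) ≤ n := by exact_mod_cast le_max_left _ _
    have h2 : (⌊z⌋₊ : ℝ) ≤ n := by exact_mod_cast le_max_right _ _
    linarith [Nat.lt_floor_add_one z]
  calc ∑ q ∈ Q, log q / (q : ℝ) ^ 2 = ∑ q ∈ Q, f q / (q : ℝ) ^ 2 :=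
        sum_congr rfl fun q hq => by simp only [f, if_pos (hQ q hq).1]
    _ ≤ ∑ q ∈ Ioc n (max n (Q.sup id)), f q / (q : ℝ) ^ 2 :=
        sum_le_sum_of_subset_of_nonneg
          (fun q hq => mem_Ioc.2 ⟨hnq q hq, (le_sup (f := id) hq).trans (le_max_right _ _)⟩)
          fun q _ _ => div_nonneg (hf q) (sq_nonneg _)
    _ ≤ 2 * log 4 / n :=
        sum_Ioc_div_sq_le hf hchebyshev (Nat.one_pos.trans_le (le_max_left _ _)) (le_max_left _ _)
    _ ≤ 4 * log 4 / z := by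
        have h1 : (0 : ℝ) < n := by exact_mod_cast Nat.one_pos.trans_le (le_max_left 1 ⌊z⌋₊)
        rw [div_le_div_iff₀ h1 hz]
        nlinarith [Real.log_nonneg (by norm_num : (1 : ℝ) ≤ 4)]

theorem dvd_prod_add_mul_of_dvd_factorial {k N M : ℕ} (hk : k.Coprime N) (hN : N ∣ M.factorial)
    (c : ℕ) : N ∣ ∏ i ∈ range M, (c + k * i) := by
  have hunit : IsUnit (k : ZMod N) := (ZMod.isUnit_iff_coprime k N).2 hk
  have : NeZero N := ⟨fun h => M.factorial_ne_zero (Nat.eq_zero_of_zero_dvd (h ▸ hN))⟩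
  obtain ⟨w, hw⟩ : ∃ w : ℕ, (k : ZMod N) * w = c :=
    ⟨(hunit.unit⁻¹ * c : ZMod N).val, by
      rw [ZMod.natCast_zmod_val, ← mul_assoc, IsUnit.mul_val_inv, one_mul]⟩
  have hasc : ((w.ascFactorial M : ℕ) : ZMod N) = 0 :=
    (ZMod.natCast_eq_zero_iff _ _).2 (hN.trans (Nat.factorial_dvd_ascFactorial w M))
  rw [← ZMod.natCast_eq_zero_iff]
  calc ((∏ i ∈ range M, (c + k * i) : ℕ) : ZMod N)
      = ∏ i ∈ range M, (k : ZMod N) * (w + i : ℕ) := by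
        push_cast
        exact prod_congr rfl fun i _ => by rw [← hw, mul_add]
    _ = (k : ZMod N) ^ M * (w.ascFactorial M : ℕ) := by
        rw [prod_mul_distrib, prod_const, card_range, Nat.ascFactorial_eq_prod_range, Nat.cast_prod]
    _ = 0 := by rw [hasc, mul_zero]

theorem prod_primes_modEq_le_of_lt {q r c M : ℕ} (hq : q.Prime) (hc₀ : 0 < c) (hc : c ≤ q ^ r)
    {S : Finset ℕ} (hS : ∀ p ∈ S, p.Prime ∧ M < p ∧ p ≤ q ^ r * M ∧ p ≡ c [MOD q ^ r]) :
    ∏ p ∈ S, p ≤ q ^ ((r + 1) * M) := by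
  set P := ∏ i ∈ range M, (c + q ^ r * i)
  set v := M.factorial.factorization q
  set N := M.factorial / q ^ v
  have hM : q ^ v * N = M.factorial := Nat.ordProj_mul_ordCompl_eq_self _ _
  have hv : v ≤ M := by
    have hle := Nat.factorization_factorial_le_div_pred hq M
    exact_mod_cast hle.trans (Nat.div_le_self M (q - 1))
  have hN : N ∣ P := dvd_prod_add_mul_of_dvd_factorial
    ((Nat.coprime_ordCompl hq M.factorial_ne_zero).pow_left r) (Nat.ordCompl_dvd _ _) c
  have hD : ∏ p ∈ S, p ∣ P := by
    refine prod_primes_dvd _ (fun p hp => (hS p hp).1.prime) fun p hp => ?_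
    obtain ⟨hprime, -, hpM, hmod⟩ := hS p hp
    have hcp : c ≤ p := hmod.symm.le_of_lt_add (by have := hprime.pos; omega)
    obtain ⟨i, hi⟩ := (Nat.modEq_iff_dvd' hcp).1 hmod.symm
    have hp_eq : p = c + q ^ r * i := by omega
    have hiM : i < M := lt_of_mul_lt_mul_left (a := q ^ r) (by omega) (Nat.zero_le _)
    exact hp_eq ▸ dvd_prod_of_mem (fun i => c + q ^ r * i) (mem_range.2 hiM)
  have hcoprime : (∏ p ∈ S, p).Coprime N := Nat.Coprime.prod_left fun p hp =>
    ((hS p hp).1.coprime_factorial_of_lt (hS p hp).2.1).coprime_dvd_right (Nat.ordCompl_dvd _ _)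
  have hP : P ≤ q ^ (r * M) * M.factorial := by
    calc P ≤ ∏ i ∈ range M, q ^ r * (i + 1) :=
          prod_le_prod' fun i _ => by rw [mul_add, mul_one, add_comm]; gcongr
      _ = q ^ (r * M) * M.factorial := by
          rw [prod_mul_distrib, prod_const, card_range, ← pow_mul, prod_range_add_one_eq_factorial]
  have hN₀ : 0 < N := Nat.ordCompl_pos q M.factorial_ne_zero
  refine Nat.le_of_mul_le_mul_right ?_ hN₀
  calc (∏ p ∈ S, p) * N ≤ P := Nat.le_of_dvd (prod_pos fun i _ => by omega)
        (hcoprime.mul_dvd_of_dvd_of_dvd hD hN)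
    _ ≤ q ^ (r * M) * (q ^ v * N) := hM ▸ hP
    _ ≤ q ^ (r * M) * (q ^ M * N) := by gcongr; exact hq.one_lt.le
    _ = q ^ ((r + 1) * M) * N := by ring

theorem prod_primes_modEq_le {q r c M : ℕ} (hq : q.Prime) (hc₀ : 0 < c) (hc : c ≤ q ^ r)
    {S : Finset ℕ} (hS : ∀ p ∈ S, p.Prime ∧ p ≤ q ^ r * M ∧ p ≡ c [MOD q ^ r]) :
    ∏ p ∈ S, p ≤ q ^ ((r + 3) * M) := by
  have hlarge : ∏ p ∈ S with M < p, p ≤ q ^ ((r + 1) * M) :=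
    prod_primes_modEq_le_of_lt hq hc₀ hc fun p hp => by
      obtain ⟨hpS, hMp⟩ := mem_filter.1 hp
      exact ⟨(hS p hpS).1, hMp, (hS p hpS).2⟩
  have hsmall : ∏ p ∈ S with ¬ M < p, p ≤ q ^ (2 * M) := by
    calc ∏ p ∈ S with ¬ M < p, p ≤ ∏ p ∈ M.primesLE, p :=
          prod_le_prod_of_subset_of_one_le'
            (fun p hp => Nat.mem_primesLE.2
              ⟨not_lt.1 (mem_filter.1 hp).2, (hS p (mem_filter.1 hp).1).1⟩)
            fun p hp _ => (Nat.prime_of_mem_primesLE hp).one_le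
      _ = primorial M := (primorial_eq_prod_primesLE M).symm
      _ ≤ (2 ^ 2) ^ M := primorial_le_four_pow M
      _ ≤ q ^ (2 * M) := by rw [pow_mul]; gcongr; exact hq.two_le
  calc ∏ p ∈ S, p = (∏ p ∈ S with M < p, p) * ∏ p ∈ S with ¬ M < p, p :=
        (prod_filter_mul_prod_filter_not S _ _).symm
    _ ≤ q ^ ((r + 1) * M) * q ^ (2 * M) := Nat.mul_le_mul hlarge hsmall
    _ = q ^ ((r + 3) * M) := by ring

theorem sum_log_primes_modEq_le {q r c : ℕ} (hq : q.Prime) (hc₀ : 0 < c) (hc : c ≤ q ^ r)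
    {t : ℝ} (ht : (q : ℝ) ^ r ≤ t) {S : Finset ℕ}
    (hS : ∀ p ∈ S, p.Prime ∧ p ≤ t ∧ p ≡ c [MOD q ^ r]) :
    ∑ p ∈ S, log p ≤ 2 * (r + 3) * (t * (log q / (q : ℝ) ^ r)) := by
  have hk : 0 < (q : ℝ) ^ r := pow_pos (by exact_mod_cast hq.pos) r
  set M := ⌈t / (q : ℝ) ^ r⌉₊
  have hM : (M : ℝ) ≤ 2 * (t / (q : ℝ) ^ r) := by
    have hlt := Nat.ceil_lt_add_one (div_nonneg (hk.le.trans ht) hk.le)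
    have hone : 1 ≤ t / (q : ℝ) ^ r := (one_le_div hk).2 ht
    linarith
  have hprod : ∏ p ∈ S, p ≤ q ^ ((r + 3) * M) :=
    prod_primes_modEq_le hq hc₀ hc fun p hp => by
      obtain ⟨hprime, hpt, hmod⟩ := hS p hp
      refine ⟨hprime, ?_, hmod⟩
      have htM : t ≤ (q : ℝ) ^ r * M := (div_le_iff₀' hk).1 (Nat.le_ceil _)
      exact_mod_cast hpt.trans htM
  calc ∑ p ∈ S, log p = log (∏ p ∈ S, p : ℕ) := by
        rw [Nat.cast_prod, Real.log_prod fun p hp => by exact_mod_cast (hS p hp).1.ne_zero]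
    _ ≤ log (q ^ ((r + 3) * M) : ℕ) := Real.log_le_log
        (by exact_mod_cast prod_pos fun p hp => (hS p hp).1.pos) (by exact_mod_cast hprod)
    _ = (r + 3) * log q * M := by push_cast; rw [Real.log_pow]; push_cast; ring
    _ ≤ (r + 3) * log q * (2 * (t / (q : ℝ) ^ r)) := by
        have := Real.log_natCast_nonneg q
        gcongr
    _ = 2 * (r + 3) * (t * (log q / (q : ℝ) ^ r)) := by ring

theorem log_le_two_mul_log_of_sqrt_lt {t p : ℝ} (ht : 0 < t) (hp : √t < p) :
    log t ≤ 2 * log p := by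
  have := Real.log_le_log (Real.sqrt_pos.2 ht) hp.le
  rw [Real.log_sqrt ht.le] at this
  linarith

theorem card_primes_modEq_le {q r c : ℕ} (hq : q.Prime) (hc₀ : 0 < c) (hc : c ≤ q ^ r)
    {t : ℝ} (ht : 1 < t) (hqt : (q : ℝ) ^ r ≤ t) {S : Finset ℕ}
    (hS : ∀ p ∈ S, p.Prime ∧ √t < p ∧ p ≤ t ∧ p ≡ c [MOD q ^ r]) :
    (#S : ℝ) ≤ 4 * (r + 3) * (t / log t) * (log q / (q : ℝ) ^ r) := by
  have hsum : ∑ p ∈ S, log p ≤ 2 * (r + 3) * (t * (log q / (q : ℝ) ^ r)) :=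
    sum_log_primes_modEq_le hq hc₀ hc hqt fun p hp => ⟨(hS p hp).1, (hS p hp).2.2⟩
  have hcard : #S * log t ≤ 2 * ∑ p ∈ S, log p := by
    rw [← nsmul_eq_mul, mul_sum]
    exact card_nsmul_le_sum _ _ _ fun p hp =>
      log_le_two_mul_log_of_sqrt_lt (by linarith) (hS p hp).2.1
  calc (#S : ℝ) ≤ 2 * (2 * (r + 3) * (t * (log q / (q : ℝ) ^ r))) / log t := by
        rw [le_div_iff₀ (Real.log_pos ht)]; linarith
    _ = _ := by ring

theorem roughPart_dvd (z : ℝ) {m : ℕ} (hm : m ≠ 0) : roughPart z m ∣ m := by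
  conv_rhs => rw [← Nat.prod_factorization_pow_eq_self hm]
  exact prod_dvd_prod_of_subset _ _ _ (filter_subset _ _)

theorem lt_of_prime_dvd_roughPart {z : ℝ} {m q : ℕ} (hq : q.Prime) (h : q ∣ roughPart z m) :
    z < q := by
  obtain ⟨p, hp, hqp⟩ := (hq.prime.dvd_finsetProd_iff _).1 h
  obtain ⟨hpm, hzp⟩ := mem_filter.1 hp
  rwa [(Nat.prime_dvd_prime_iff_eq hq (Nat.prime_of_mem_primeFactors hpm)).1
    (hq.dvd_of_dvd_pow hqp)]

theorem exists_prime_sq_dvd_of_not_squarefree_roughPart {z : ℝ} {m : ℕ} (hm : m ≠ 0)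
    (h : ¬ Squarefree (roughPart z m)) : ∃ q : ℕ, q.Prime ∧ z < q ∧ q ^ 2 ∣ m := by
  rw [Nat.squarefree_iff_prime_squarefree] at h
  push Not at h
  obtain ⟨q, hq, hqq⟩ := h
  exact ⟨q, hq, lt_of_prime_dvd_roughPart hq (dvd_of_mul_left_dvd hqq),
    pow_two q ▸ hqq.trans (roughPart_dvd z hm)⟩

theorem card_not_squarefree_roughPart_le {t z : ℝ} (ht : 1 < t) (hz : 0 < z) {S : Finset ℕ}
    (hS : ∀ p ∈ S, p.Prime ∧ √t < p ∧ p ≤ t ∧ ¬ Squarefree (roughPart z (p - 1))) :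
    (#S : ℝ) ≤ 80 * log 4 * (t / (log t * z)) := by
  set Q : Finset ℕ := {q ∈ Nat.primesLE ⌊t⌋₊ | z < (q : ℝ) ∧ (q : ℝ) ^ 2 ≤ t}
  have hcover : S ⊆ Q.biUnion fun q => {p ∈ S | p ≡ 1 [MOD q ^ 2]} := fun p hp => by
    obtain ⟨hprime, -, hpt, hsq⟩ := hS p hp
    obtain ⟨q, hq, hzq, hqp⟩ := exists_prime_sq_dvd_of_not_squarefree_roughPart
      (Nat.sub_ne_zero_of_lt hprime.one_lt) hsq
    have hqp_le : q ^ 2 ≤ p :=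
      (Nat.le_of_dvd (Nat.sub_pos_of_lt hprime.one_lt) hqp).trans (Nat.sub_le p 1)
    have hqt : (q : ℝ) ^ 2 ≤ t := le_trans (by exact_mod_cast hqp_le) hpt
    have hq_le : (q : ℝ) ≤ t :=
      le_trans (by exact_mod_cast (Nat.le_self_pow two_ne_zero q).trans hqp_le) hpt
    exact mem_biUnion.2 ⟨q, mem_filter.2 ⟨Nat.mem_primesLE.2 ⟨Nat.le_floor hq_le, hq⟩, hzq, hqt⟩,
      mem_filter.2 ⟨hp, ((Nat.modEq_iff_dvd' hprime.one_le).2 hqp).symm⟩⟩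
  have hlog : 0 < log t := Real.log_pos ht
  calc (#S : ℝ) ≤ ∑ q ∈ Q, (#{p ∈ S | p ≡ 1 [MOD q ^ 2]} : ℝ) := by
        exact_mod_cast (card_le_card hcover).trans card_biUnion_le
    _ ≤ ∑ q ∈ Q, 20 * (t / log t) * (log q / (q : ℝ) ^ 2) := sum_le_sum fun q hq => by
        obtain ⟨hqt, -, hq2⟩ := mem_filter.1 hq
        have hq := Nat.prime_of_mem_primesLE hqt
        have hcard := card_primes_modEq_le (S := {p ∈ S | p ≡ 1 [MOD q ^ 2]}) hq one_pos
          (Nat.one_le_pow _ _ hq.pos) ht hq2 fun p hp => by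
            obtain ⟨hp, hmod⟩ := mem_filter.1 hp
            exact ⟨(hS p hp).1, (hS p hp).2.1, (hS p hp).2.2.1, hmod⟩
        norm_num at hcard ⊢
        exact hcard
    _ = 20 * (t / log t) * ∑ q ∈ Q, log q / (q : ℝ) ^ 2 := (mul_sum _ _ _).symm
    _ ≤ 20 * (t / log t) * (4 * log 4 / z) := by
        gcongr
        exact sum_log_div_sq_le hz fun q hq =>
          ⟨Nat.prime_of_mem_primesLE (mem_filter.1 hq).1, (mem_filter.1 hq).2.1⟩
    _ = 80 * log 4 * (t / (log t * z)) := by field_simp; ring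

/-! ### Integers with a large smooth part -/

theorem sum_Ioc_rpow_neg_le {σ : ℝ} (hσ₀ : 0 ≤ σ) (hσ₁ : σ < 1) (n : ℕ) :
    ∑ k ∈ Ioc 0 n, (k : ℝ) ^ (-σ) ≤ (n : ℝ) ^ (1 - σ) / (1 - σ) := by
  have hσ : 0 < 1 - σ := sub_pos.2 hσ₁
  induction n with
  | zero => simp [Real.zero_rpow hσ.ne']
  | succ n ih =>
    have hm : (1 : ℝ) ≤ (n + 1 : ℕ) := by exact_mod_cast n.succ_pos
    have hn : (n : ℝ) = (n + 1 : ℕ) - 1 := by push_cast; ring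
    set m := ((n + 1 : ℕ) : ℝ)
    have hm₀ : 0 < m := by linarith
    have hinv : 0 ≤ 1 + -m⁻¹ := by linarith [inv_le_one_of_one_le₀ hm]
    have hstep : (n : ℝ) ^ (1 - σ) ≤ m ^ (1 - σ) - (1 - σ) * m ^ (-σ) := by
      calc (n : ℝ) ^ (1 - σ) = m ^ (1 - σ) * (1 + -m⁻¹) ^ (1 - σ) := by
            rw [← Real.mul_rpow hm₀.le hinv, hn]
            congr 1
            field_simp
            ring
        _ ≤ m ^ (1 - σ) * (1 + (1 - σ) * -m⁻¹) := by
            gcongr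
            exact rpow_one_add_le_one_add_mul_self (by linarith) hσ.le (by linarith)
        _ = m ^ (1 - σ) - (1 - σ) * m ^ (-σ) := by
            rw [show -σ = 1 - σ - 1 by ring, Real.rpow_sub_one hm₀.ne']; ring
    rw [sum_Ioc_succ_top n.zero_le, le_div_iff₀ hσ]
    rw [le_div_iff₀ hσ] at ih
    linarith

theorem inv_one_sub_le_exp {u v : ℝ} (hu : 0 ≤ u) (huv : u ≤ v) (hv : v < 1) :
    (1 - u)⁻¹ ≤ exp (u / (1 - v)) := by
  have hu₁ : 0 < 1 - u := by linarith
  calc (1 - u)⁻¹ = u / (1 - u) + 1 := by field_simp; ring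
    _ ≤ exp (u / (1 - u)) := Real.add_one_le_exp _
    _ ≤ exp (u / (1 - v)) := by gcongr

theorem sum_smoothNumbers_rpow_neg_le {σ : ℝ} (hσ₀ : 0 < σ) (hσ₁ : σ < 1) {n : ℕ}
    {D : Finset ℕ} (hD : ∀ d ∈ D, d ∈ Nat.smoothNumbers (n + 1)) :
    ∑ d ∈ D, (d : ℝ) ^ (-σ) ≤ exp ((n : ℝ) ^ (1 - σ) / ((1 - σ) * (1 - 2 ^ (-σ)))) := by
  let f : ℕ →* ℝ :=
    { toFun d := (d : ℝ) ^ (-σ)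
      map_one' := by simp
      map_mul' m n := by push_cast; exact Real.mul_rpow m.cast_nonneg n.cast_nonneg }
  have hf : ∀ d, 0 ≤ f d := fun d => Real.rpow_nonneg d.cast_nonneg _
  have htwo : (2 : ℝ) ^ (-σ) < 1 :=
    Real.rpow_lt_one_of_one_lt_of_neg one_lt_two (neg_neg_of_pos hσ₀)
  have hprime : ∀ {p : ℕ}, p.Prime → f p ≤ 2 ^ (-σ) := fun hp =>
    Real.rpow_le_rpow_of_nonpos two_pos (by exact_mod_cast hp.two_le) (by linarith)
  have heuler : HasSum (fun m : Nat.smoothNumbers (n + 1) => f m)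
      (∏ p ∈ (n + 1).primesBelow, (1 - f p)⁻¹) :=
    (EulerProduct.summable_and_hasSum_smoothNumbers_prod_primesBelow_geometric
      (fun hp => by rw [Real.norm_of_nonneg (hf _)]; exact (hprime hp).trans_lt htwo) (n + 1)).2
  calc ∑ d ∈ D, f d = ∑ d ∈ D.subtype (· ∈ Nat.smoothNumbers (n + 1)), f d :=
        (sum_subtype_of_mem f hD).symm
    _ ≤ ∏ p ∈ (n + 1).primesBelow, (1 - f p)⁻¹ := sum_le_hasSum _ (fun d _ => hf d) heuler
    _ ≤ ∏ p ∈ (n + 1).primesBelow, exp (f p / (1 - 2 ^ (-σ))) :=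
        prod_le_prod
          (fun p hp => inv_nonneg.2 (by linarith [hprime (Nat.prime_of_mem_primesBelow hp)]))
          fun p hp => inv_one_sub_le_exp (hf p) (hprime (Nat.prime_of_mem_primesBelow hp)) htwo
    _ = exp ((∑ p ∈ (n + 1).primesBelow, f p) / (1 - 2 ^ (-σ))) := by rw [← Real.exp_sum, sum_div]
    _ ≤ exp ((n : ℝ) ^ (1 - σ) / (1 - σ) / (1 - 2 ^ (-σ))) := by
        have : 0 < 1 - (2 : ℝ) ^ (-σ) := sub_pos.2 htwo
        gcongr
        refine le_trans ?_ (sum_Ioc_rpow_neg_le hσ₀.le hσ₁ n)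
        exact sum_le_sum_of_subset_of_nonneg
          (fun p hp => mem_Ioc.2 ⟨(Nat.prime_of_mem_primesBelow hp).pos,
            Nat.lt_succ_iff.1 (Nat.lt_of_mem_primesBelow hp)⟩)
          fun p _ _ => hf p
    _ = _ := by rw [div_div]

theorem smoothPart_dvd (z : ℝ) {m : ℕ} (hm : m ≠ 0) : smoothPart z m ∣ m := by
  conv_rhs => rw [← Nat.prod_factorization_pow_eq_self hm]
  exact prod_dvd_prod_of_subset _ _ _ (filter_subset _ _)

theorem smoothPart_mem_smoothNumbers (z : ℝ) (m : ℕ) :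
    smoothPart z m ∈ Nat.smoothNumbers (⌊z⌋₊ + 1) := by
  refine Nat.mem_smoothNumbers'.2 fun q hq hdvd => ?_
  obtain ⟨p, hp, hqp⟩ := (hq.prime.dvd_finsetProd_iff _).1 hdvd
  obtain ⟨hpm, hpz⟩ := mem_filter.1 hp
  rw [(Nat.prime_dvd_prime_iff_eq hq (Nat.prime_of_mem_primeFactors hpm)).1
    (hq.dvd_of_dvd_pow hqp)]
  exact Nat.lt_succ_of_le (Nat.le_floor hpz)

theorem card_Ioc_smoothPart_eq_le (z : ℝ) (d N : ℕ) :
    #{m ∈ Ioc 0 N | smoothPart z m = d} ≤ N / d := by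
  rw [← Nat.Ioc_filter_dvd_card_eq_div]
  refine card_le_card fun m hm => ?_
  obtain ⟨hmN, rfl⟩ := mem_filter.1 hm
  exact mem_filter.2 ⟨hmN, smoothPart_dvd z (mem_Ioc.1 hmN).1.ne'⟩

theorem card_Ioc_lt_smoothPart_le {σ y z : ℝ} (hσ₀ : 0 < σ) (hσ₁ : σ < 1) (hy : 0 < y) (hz : 0 ≤ z)
    (N : ℕ) : (#{m ∈ Ioc 0 N | y < smoothPart z m} : ℝ) ≤
      N * (y ^ (-(1 - σ)) * exp (z ^ (1 - σ) / ((1 - σ) * (1 - 2 ^ (-σ))))) := by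
  set A : Finset ℕ := {m ∈ Ioc 0 N | y < smoothPart z m}
  set D := A.image (smoothPart z)
  have hfiber : ∀ d ∈ D, (#{m ∈ A | smoothPart z m = d} : ℝ) ≤
      N * (y ^ (-(1 - σ)) * (d : ℝ) ^ (-σ)) := fun d hd => by
    have hyd : y < d := by
      obtain ⟨m, hm, rfl⟩ := mem_image.1 hd
      exact (mem_filter.1 hm).2
    have hd₀ : (0 : ℝ) < d := hy.trans hyd
    calc (#{m ∈ A | smoothPart z m = d} : ℝ) ≤ (N / d : ℕ) := by
          exact_mod_cast (card_le_card (filter_subset_filter _ (filter_subset _ _))).trans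
            (card_Ioc_smoothPart_eq_le z d N)
      _ ≤ N * (d : ℝ) ^ (-(1 : ℝ)) := by
          rw [Real.rpow_neg_one, ← div_eq_mul_inv]; exact Nat.cast_div_le
      _ = N * ((d : ℝ) ^ (-(1 - σ)) * (d : ℝ) ^ (-σ)) := by
          rw [← Real.rpow_add hd₀]; ring_nf
      _ ≤ N * (y ^ (-(1 - σ)) * (d : ℝ) ^ (-σ)) := by
          gcongr _ * (?_ * _)
          exact Real.rpow_le_rpow_of_nonpos hy hyd.le (by linarith)
  calc (#A : ℝ) = ∑ d ∈ D, (#{m ∈ A | smoothPart z m = d} : ℝ) := by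
        rw [card_eq_sum_card_image (smoothPart z) A, Nat.cast_sum]
    _ ≤ ∑ d ∈ D, N * (y ^ (-(1 - σ)) * (d : ℝ) ^ (-σ)) := sum_le_sum hfiber
    _ = N * (y ^ (-(1 - σ)) * ∑ d ∈ D, (d : ℝ) ^ (-σ)) := by rw [← mul_sum, ← mul_sum]
    _ ≤ N * (y ^ (-(1 - σ)) * exp ((⌊z⌋₊ : ℝ) ^ (1 - σ) / ((1 - σ) * (1 - 2 ^ (-σ))))) := by
        gcongr
        exact sum_smoothNumbers_rpow_neg_le hσ₀ hσ₁ fun d hd => by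
          obtain ⟨m, -, rfl⟩ := mem_image.1 hd
          exact smoothPart_mem_smoothNumbers z m
    _ ≤ N * (y ^ (-(1 - σ)) * exp (z ^ (1 - σ) / ((1 - σ) * (1 - 2 ^ (-σ))))) := by
        have : 0 < 1 - σ := sub_pos.2 hσ₁
        have htwo : (2 : ℝ) ^ (-σ) < 1 :=
          Real.rpow_lt_one_of_one_lt_of_neg one_lt_two (neg_neg_of_pos hσ₀)
        have : 0 < 1 - (2 : ℝ) ^ (-σ) := sub_pos.2 htwo
        gcongr
        exact Nat.floor_le hz

theorem exp_neg_sq_div_add_le {s : ℝ} (hs : 0 < s) :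
    exp (-(s ^ 2 / 8)) * exp (12 * s) ≤ exp 338 * 720 / s ^ 6 := by
  have hsix : s ^ 6 ≤ 720 * exp s := by
    have := Real.pow_div_factorial_le_exp s hs.le 6
    rwa [div_le_iff₀' (by positivity), show ((Nat.factorial 6 : ℕ) : ℝ) = 720 by
      norm_num [Nat.factorial]] at this
  calc exp (-(s ^ 2 / 8)) * exp (12 * s) ≤ exp (338 - s) := by
        rw [← Real.exp_add, Real.exp_le_exp]
        linarith [sq_nonneg (s - 52)]
    _ = exp 338 / exp s := Real.exp_sub _ _
    _ ≤ exp 338 * 720 / s ^ 6 := by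
        rw [div_le_div_iff₀ (Real.exp_pos s) (by positivity), mul_assoc]
        gcongr

theorem card_Ioc_exp_lt_smoothPart_le {s z : ℝ} (hs : 0 < s) (hz : 0 ≤ z) (hzs : z ≤ s ^ 4)
    (N : ℕ) :
    (#{m ∈ Ioc 0 N | exp (s ^ 2 / 2) < smoothPart z m} : ℝ) ≤ N * (exp 338 * 720 / s ^ 6) := by
  have htwo : (2 : ℝ) ^ (-(3 / 4) : ℝ) ≤ 2 / 3 := by
    refine le_of_pow_le_pow_left₀ four_ne_zero (by norm_num) ?_
    rw [← Real.rpow_natCast, ← Real.rpow_mul two_pos.le]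
    norm_num
  have hroot : z ^ (1 - (3 / 4 : ℝ)) ≤ s := by
    calc z ^ (1 - (3 / 4 : ℝ)) ≤ (s ^ 4) ^ (1 - (3 / 4 : ℝ)) := by gcongr
      _ = s := by rw [← Real.rpow_natCast, ← Real.rpow_mul hs.le]; norm_num
  calc (#{m ∈ Ioc 0 N | exp (s ^ 2 / 2) < smoothPart z m} : ℝ)
      ≤ N * (exp (s ^ 2 / 2) ^ (-(1 - (3 / 4 : ℝ))) *
          exp (z ^ (1 - (3 / 4 : ℝ)) / ((1 - (3 / 4 : ℝ)) * (1 - 2 ^ (-(3 / 4) : ℝ))))) :=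
        card_Ioc_lt_smoothPart_le (by norm_num) (by norm_num) (Real.exp_pos _) hz N
    _ ≤ N * (exp (-(s ^ 2 / 8)) * exp (12 * s)) := by
        gcongr
        · rw [← Real.exp_mul]; apply le_of_eq; ring_nf
        · rw [div_le_iff₀ (by nlinarith)]; nlinarith
    _ ≤ N * (exp 338 * 720 / s ^ 6) := by gcongr; exact exp_neg_sq_div_add_le hs

theorem card_exp_sqrt_log_lt_smoothPart_le {t z : ℝ} (ht : 1 < t) (hz : 0 ≤ z)
    (hzt : z ≤ 2 * log t) {S : Finset ℕ}
    (hS : ∀ p ∈ S, p.Prime ∧ √t < p ∧ p ≤ t ∧ exp (√(log p)) < smoothPart z (p - 1)) :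
    (#S : ℝ) ≤ exp 338 * 720 * (t / (log t) ^ ((3 : ℝ) / 2)) := by
  have hlog : 0 < log t := Real.log_pos ht
  set s := (2 * log t) ^ ((1 : ℝ) / 4)
  have hs : 0 < s := by positivity
  have hs₄ : 2 * log t = s ^ 4 := by
    rw [← Real.rpow_natCast, ← Real.rpow_mul (by positivity)]; norm_num
  have hs₂ : √(log t / 2) = s ^ 2 / 2 := by
    rw [show log t / 2 = (s ^ 2 / 2) ^ 2 by linear_combination (1 / 4) * hs₄]
    exact Real.sqrt_sq (by positivity)
  have hs₆ : (log t) ^ ((3 : ℝ) / 2) ≤ s ^ 6 := by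
    calc (log t) ^ ((3 : ℝ) / 2) ≤ (2 * log t) ^ ((3 : ℝ) / 2) := by gcongr; linarith
      _ = s ^ 6 := by rw [← Real.rpow_natCast, ← Real.rpow_mul (by positivity)]; norm_num
  have hcard : #S ≤ #{m ∈ Ioc 0 ⌊t⌋₊ | exp (s ^ 2 / 2) < smoothPart z m} := by
    refine card_le_card_of_injOn (· - 1) (fun p hp => ?_) fun p hp p' hp' h => ?_
    · obtain ⟨hprime, hpl, hpt, hsmooth⟩ := hS p hp
      refine mem_filter.2 ⟨mem_Ioc.2 ⟨Nat.sub_pos_of_lt hprime.one_lt,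
        (Nat.sub_le p 1).trans (Nat.le_floor hpt)⟩, lt_of_le_of_lt ?_ hsmooth⟩
      rw [← hs₂]
      gcongr
      linarith [log_le_two_mul_log_of_sqrt_lt (by linarith) hpl]
    · exact Nat.sub_one_cancel (hS p hp).1.pos (hS p' hp').1.pos h
  calc (#S : ℝ) ≤ #{m ∈ Ioc 0 ⌊t⌋₊ | exp (s ^ 2 / 2) < smoothPart z m} := by
        exact_mod_cast hcard
    _ ≤ ⌊t⌋₊ * (exp 338 * 720 / s ^ 6) :=
        card_Ioc_exp_lt_smoothPart_le hs hz (hzt.trans_eq hs₄) _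
    _ ≤ t * (exp 338 * 720 / (log t) ^ ((3 : ℝ) / 2)) := by
        gcongr
        exact Nat.floor_le (by linarith)
    _ = exp 338 * 720 * (t / (log t) ^ ((3 : ℝ) / 2)) := by ring

/-! ### Primes modulo which given integers generate a small group -/

theorem card_primeFactors_le_of_le_two_pow {n k : ℕ} (hn : n ≠ 0) (hk : n ≤ 2 ^ k) :
    #n.primeFactors ≤ k := by
  refine (Nat.pow_le_pow_iff_right one_lt_two).1 ?_
  calc 2 ^ #n.primeFactors ≤ ∏ p ∈ n.primeFactors, p :=
        pow_card_le_prod _ _ _ fun p hp => (Nat.prime_of_mem_primeFactors hp).two_le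
    _ ≤ n := Nat.le_of_dvd hn.bot_lt (Nat.prod_primeFactors_dvd n)
    _ ≤ 2 ^ k := hk

theorem card_primes_dvd_le {ι : Type*} {I : Finset ι} {F : ι → ℤ} {k : ℕ}
    (hF₀ : ∀ i ∈ I, F i ≠ 0) (hF : ∀ i ∈ I, (F i).natAbs ≤ 2 ^ k) {S : Finset ℕ}
    (hS : ∀ p ∈ S, p.Prime ∧ ∃ i ∈ I, (p : ℤ) ∣ F i) : #S ≤ #I * k := by
  have hcover : S ⊆ I.biUnion fun i => (F i).natAbs.primeFactors := fun p hp => by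
    obtain ⟨hprime, i, hi, hdvd⟩ := hS p hp
    exact mem_biUnion.2 ⟨i, hi, Nat.mem_primeFactors.2
      ⟨hprime, Int.natCast_dvd.1 hdvd, Int.natAbs_ne_zero.2 (hF₀ i hi)⟩⟩
  exact (card_le_card hcover).trans <| card_biUnion_le_card_mul _ _ _ fun i hi =>
    card_primeFactors_le_of_le_two_pow (Int.natAbs_ne_zero.2 (hF₀ i hi)) (hF i hi)

theorem two_mul_rpow_div_log_rpow_le {r t : ℝ} (hr : 1 ≤ r) (ht : 1 < t) :
    (2 * t ^ (r / (r + 1)) / log t) ^ (1 + 1 / r) ≤ 4 * (t / (log t) ^ (1 + 1 / r)) := by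
  have ht₀ : 0 < t := by linarith
  have hlog : 0 < log t := Real.log_pos ht
  have hexp : r / (r + 1) * (1 + 1 / r) = 1 := by field_simp
  have htwo : (2 : ℝ) ^ (1 + 1 / r) ≤ 2 ^ (2 : ℝ) := by
    gcongr
    · exact one_le_two
    · linarith [(div_le_one (by positivity)).2 hr]
  calc (2 * t ^ (r / (r + 1)) / log t) ^ (1 + 1 / r)
      = 2 ^ (1 + 1 / r) * (t / (log t) ^ (1 + 1 / r)) := by
        rw [Real.div_rpow (by positivity) hlog.le, Real.mul_rpow two_pos.le (by positivity),
          ← Real.rpow_mul ht₀.le, hexp, Real.rpow_one, mul_div_assoc]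
    _ ≤ 2 ^ (2 : ℝ) * (t / (log t) ^ (1 + 1 / r)) := by gcongr
    _ = 4 * (t / (log t) ^ (1 + 1 / r)) := by norm_num

section MultiplicativeRelations

variable {ι : Type*} [Fintype ι] {a : ι → ℤ}

/-- Multiplicative independence of a finite family of integers, the exponents being allowed to be
negative. -/
def MultIndep (a : ι → ℤ) : Prop :=
  ∀ e : ι → ℤ, ∏ i, (a i : ℚ) ^ e i = 1 → e = 0

/-- The integer `∏ aᵢ ^ eᵢ⁺ - ∏ aᵢ ^ eᵢ⁻`, which detects the relation `∏ aᵢ ^ eᵢ = 1`, both over `ℚ`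
and modulo primes not dividing any `aᵢ`. -/
def relationGap (a e : ι → ℤ) : ℤ :=
  ∏ i, a i ^ (e i).toNat - ∏ i, a i ^ (-e i).toNat

theorem relationGap_ne_zero (ha : ∀ i, a i ≠ 0) (hind : MultIndep a) {e : ι → ℤ} (he : e ≠ 0) :
    relationGap a e ≠ 0 := by
  refine fun hzero => he (hind e ?_)
  have heq : ∏ i, (a i : ℚ) ^ (e i).toNat = ∏ i, (a i : ℚ) ^ (-e i).toNat := by
    exact_mod_cast sub_eq_zero.1 hzero
  calc ∏ i, (a i : ℚ) ^ e i
      = ∏ i, (a i : ℚ) ^ (e i).toNat / (a i : ℚ) ^ (-e i).toNat := prod_congr rfl fun i _ => by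
        rw [← zpow_natCast, ← zpow_natCast, ← zpow_sub₀ (Int.cast_ne_zero.2 (ha i)),
          Int.toNat_sub_toNat_neg]
    _ = 1 := by
        rw [prod_div_distrib, heq, div_self]
        exact prod_ne_zero_iff.2 fun i _ => pow_ne_zero _ (Int.cast_ne_zero.2 (ha i))

theorem natAbs_relationGap_le {e : ι → ℤ} {K : ℕ} (he : ∀ i, e i ∈ Icc (-K : ℤ) K) :
    (relationGap a e).natAbs ≤ 2 ^ (K * ∑ i, (a i).natAbs + 1) := by
  have hprod : ∀ n : ι → ℕ, (∀ i, n i ≤ K) →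
      (∏ i, a i ^ n i).natAbs ≤ 2 ^ (K * ∑ i, (a i).natAbs) := fun n hn => by
    calc (∏ i, a i ^ n i).natAbs = ∏ i, (a i).natAbs ^ n i := by
          rw [← Int.natAbsHom_apply, map_prod]
          exact prod_congr rfl fun i _ => Int.natAbs_pow _ _
      _ ≤ ∏ i, 2 ^ (K * (a i).natAbs) := prod_le_prod' fun i _ => by
          calc (a i).natAbs ^ n i ≤ (2 ^ (a i).natAbs) ^ n i := by
                gcongr; exact Nat.lt_two_pow_self.le
            _ ≤ (2 ^ (a i).natAbs) ^ K := Nat.pow_le_pow_right (by positivity) (hn i)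
            _ = 2 ^ (K * (a i).natAbs) := by rw [← pow_mul, mul_comm]
      _ = 2 ^ (K * ∑ i, (a i).natAbs) := by rw [prod_pow_eq_pow_sum, mul_sum]
  calc (relationGap a e).natAbs
      ≤ (∏ i, a i ^ (e i).toNat).natAbs + (∏ i, a i ^ (-e i).toNat).natAbs :=
        Int.natAbs_sub_le _ _
    _ ≤ 2 ^ (K * ∑ i, (a i).natAbs) + 2 ^ (K * ∑ i, (a i).natAbs) := by
        gcongr
        · exact hprod _ fun i => Int.toNat_le.2 (mem_Icc.1 (he i)).2
        · exact hprod _ fun i => Int.toNat_le.2 (neg_le.1 (mem_Icc.1 (he i)).1)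
    _ = 2 ^ (K * ∑ i, (a i).natAbs + 1) := by ring

theorem dvd_relationGap_sub {p : ℕ} [Fact p.Prime] (hpa : ∀ i, ¬ (p : ℤ) ∣ a i) {m n : ι → ℕ}
    (h : ∏ i, (a i : ZMod p) ^ m i = ∏ i, (a i : ZMod p) ^ n i) :
    (p : ℤ) ∣ relationGap a fun i => (m i : ℤ) - n i := by
  have hne : ∏ i, (a i : ZMod p) ^ n i ≠ 0 := prod_ne_zero_iff.2 fun i _ =>
    pow_ne_zero _ fun hi => hpa i ((ZMod.intCast_zmod_eq_zero_iff_dvd _ p).1 hi)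
  have hexp : (∏ i, (a i : ZMod p) ^ (m i - n i)) * ∏ i, (a i : ZMod p) ^ n i =
      (∏ i, (a i : ZMod p) ^ (n i - m i)) * ∏ i, (a i : ZMod p) ^ m i := by
    simp only [← prod_mul_distrib, ← pow_add]
    exact prod_congr rfl fun i _ => congrArg _ (by omega)
  rw [h] at hexp
  rw [← ZMod.intCast_zmod_eq_zero_iff_dvd, relationGap]
  push_cast
  simp only [neg_sub, Int.toNat_sub]
  exact sub_eq_zero.2 (mul_right_cancel₀ hne hexp)

theorem exists_dvd_relationGap {p K : ℕ} (hp : p.Prime) (hpa : ∀ i, ¬ (p : ℤ) ∣ a i)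
    (hK : Nat.card (Submonoid.closure (Set.range fun i => (a i : ZMod p))) <
      (K + 1) ^ Fintype.card ι) :
    ∃ e : ι → ℤ, e ≠ 0 ∧ (∀ i, e i ∈ Icc (-K : ℤ) K) ∧ (p : ℤ) ∣ relationGap a e := by
  have : Fact p.Prime := ⟨hp⟩
  set H := Submonoid.closure (Set.range fun i => (a i : ZMod p))
  let f (n : ι → Fin (K + 1)) : H := ⟨∏ i, (a i : ZMod p) ^ (n i : ℕ),
    prod_mem fun i _ => pow_mem (Submonoid.subset_closure (Set.mem_range_self i)) _⟩
  obtain ⟨m, n, hmn, hf⟩ : ∃ m n, m ≠ n ∧ f m = f n := by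
    refine Fintype.exists_ne_map_eq_of_card_lt f ?_
    rwa [Fintype.card_fun, Fintype.card_fin, ← Nat.card_eq_fintype_card]
  refine ⟨fun i => (m i : ℤ) - (n i : ℕ), fun h => hmn ?_, fun i => ?_,
    dvd_relationGap_sub hpa (congrArg Subtype.val hf)⟩
  · ext i
    have := congrFun h i
    simp only [Pi.zero_apply] at this
    omega
  · have := (m i).is_le
    have := (n i).is_le
    simp only [mem_Icc]
    omega

theorem card_primes_natCard_closure_lt_le (ha : ∀ i, a i ≠ 0) (hind : MultIndep a) (K : ℕ)
    {S : Finset ℕ} (hS : ∀ p ∈ S, p.Prime ∧ (∀ i, ¬ (p : ℤ) ∣ a i) ∧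
      Nat.card (Submonoid.closure (Set.range fun i => (a i : ZMod p))) <
        (K + 1) ^ Fintype.card ι) :
    #S ≤ (2 * K + 1) ^ Fintype.card ι * (K * ∑ i, (a i).natAbs + 1) := by
  set I : Finset (ι → ℤ) := {e ∈ Fintype.piFinset fun _ => Icc (-K : ℤ) K | e ≠ 0}
  have hI : #I ≤ (2 * K + 1) ^ Fintype.card ι := by
    refine (card_filter_le _ _).trans_eq ?_
    rw [Fintype.card_piFinset, prod_const, card_univ, Int.card_Icc]
    congr 1
    omega
  have hcard : #S ≤ #I * (K * ∑ i, (a i).natAbs + 1) := by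
    refine card_primes_dvd_le (F := relationGap a) (fun e he => ?_) (fun e he => ?_) fun p hp => ?_
    · exact relationGap_ne_zero ha hind (mem_filter.1 he).2
    · exact natAbs_relationGap_le (Fintype.mem_piFinset.1 (mem_filter.1 he).1)
    · obtain ⟨hprime, hpa, hK⟩ := hS p hp
      obtain ⟨e, he₀, he, hdvd⟩ := exists_dvd_relationGap hprime hpa hK
      exact ⟨hprime, e, mem_filter.2 ⟨Fintype.mem_piFinset.2 he, he₀⟩, hdvd⟩
  exact hcard.trans (Nat.mul_le_mul_right _ hI)

theorem card_primes_natCard_closure_le [Nonempty ι] (ha : ∀ i, a i ≠ 0) (hind : MultIndep a)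
    {Y : ℝ} (hY : 1 ≤ Y) {S : Finset ℕ} (hS : ∀ p ∈ S, p.Prime ∧ (∀ i, ¬ (p : ℤ) ∣ a i) ∧
      (Nat.card (Submonoid.closure (Set.range fun i => (a i : ZMod p))) : ℝ) ≤ Y) :
    (#S : ℝ) ≤ 3 ^ Fintype.card ι * (∑ i, ((a i).natAbs : ℝ) + 1) *
      Y ^ (1 + 1 / (Fintype.card ι : ℝ)) := by
  set r := Fintype.card ι
  have hr : (r : ℝ) ≠ 0 := Nat.cast_ne_zero.2 Fintype.card_ne_zero
  set s := Y ^ (1 / (r : ℝ))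
  set K := ⌊s⌋₊
  have hs : 1 ≤ s := Real.one_le_rpow hY (by positivity)
  have hsr : s ^ r = Y := by
    rw [← Real.rpow_natCast, ← Real.rpow_mul (by linarith), one_div_mul_cancel hr, Real.rpow_one]
  have hKs : (K : ℝ) ≤ s := Nat.floor_le (by linarith)
  have hYK : Y < ((K + 1 : ℕ) : ℝ) ^ r := by
    rw [← hsr]
    refine pow_lt_pow_left₀ ?_ (by linarith) Fintype.card_ne_zero
    exact_mod_cast Nat.lt_floor_add_one s
  calc (#S : ℝ) ≤ (2 * K + 1) ^ r * (K * ∑ i, ((a i).natAbs : ℝ) + 1) := by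
        exact_mod_cast card_primes_natCard_closure_lt_le ha hind K fun p hp =>
          ⟨(hS p hp).1, (hS p hp).2.1, by exact_mod_cast (hS p hp).2.2.trans_lt hYK⟩
    _ ≤ (3 * s) ^ r * (s * ∑ i, ((a i).natAbs : ℝ) + s) := by gcongr; linarith
    _ = 3 ^ r * (∑ i, ((a i).natAbs : ℝ) + 1) * (s ^ r * s) := by ring
    _ = 3 ^ r * (∑ i, ((a i).natAbs : ℝ) + 1) * Y ^ (1 + 1 / (r : ℝ)) := by
        rw [hsr, Real.rpow_add (by linarith), Real.rpow_one]

theorem card_primes_natCard_closure_le_rpow_div_log [Nonempty ι] (ha : ∀ i, a i ≠ 0)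
    (hind : MultIndep a) {t : ℝ} (ht : 1 < t) {S : Finset ℕ}
    (hS : ∀ p ∈ S, p.Prime ∧ √t < p ∧ p ≤ t ∧ (∀ i, ¬ (p : ℤ) ∣ a i) ∧
      (Nat.card (Submonoid.closure (Set.range fun i => (a i : ZMod p))) : ℝ) ≤
        (p : ℝ) ^ (Fintype.card ι / (Fintype.card ι + 1) : ℝ) / log p) :
    (#S : ℝ) ≤ 4 * 3 ^ Fintype.card ι * (∑ i, ((a i).natAbs : ℝ) + 1) *
      (t / (log t) ^ (1 + 1 / (Fintype.card ι : ℝ))) := by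
  set r := Fintype.card ι
  have hr : (1 : ℝ) ≤ r := Nat.one_le_cast.2 Fintype.card_pos
  have hlog : 0 < log t := Real.log_pos ht
  have ht₀ : 0 < t := by linarith
  set Y := 2 * t ^ (r / (r + 1) : ℝ) / log t
  have hY : 1 ≤ Y := by
    rw [one_le_div hlog]
    have hhalf : (1 / 2 : ℝ) ≤ r / (r + 1) := by
      rw [div_le_div_iff₀ two_pos (by positivity)]; linarith
    calc log t ≤ t ^ (r / (r + 1) : ℝ) / (r / (r + 1)) :=
          Real.log_le_rpow_div ht₀.le (by positivity)
      _ ≤ t ^ (r / (r + 1) : ℝ) / (1 / 2) := by gcongr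
      _ = 2 * t ^ (r / (r + 1) : ℝ) := by ring
  calc (#S : ℝ) ≤ 3 ^ r * (∑ i, ((a i).natAbs : ℝ) + 1) * Y ^ (1 + 1 / (r : ℝ)) :=
        card_primes_natCard_closure_le ha hind hY fun p hp => by
          obtain ⟨hprime, hpl, hpt, hpa, hcard⟩ := hS p hp
          refine ⟨hprime, hpa, hcard.trans ?_⟩
          have hhalf : log t / 2 ≤ log p := by
            linarith [log_le_two_mul_log_of_sqrt_lt ht₀ hpl]
          calc (p : ℝ) ^ (r / (r + 1) : ℝ) / log p ≤ t ^ (r / (r + 1) : ℝ) / (log t / 2) := by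
                gcongr
            _ = Y := by rw [div_div_eq_mul_div, mul_comm]
    _ ≤ 3 ^ r * (∑ i, ((a i).natAbs : ℝ) + 1) * (4 * (t / (log t) ^ (1 + 1 / (r : ℝ)))) := by
        gcongr
        exact two_mul_rpow_div_log_rpow_le hr ht
    _ = _ := by ring

end MultiplicativeRelations

/-! ### Rare sets of primes -/

theorem card_le_of_forall_le {S : Finset ℕ} {y : ℝ} (hy : 0 ≤ y)
    (hS : ∀ n ∈ S, 0 < n ∧ (n : ℝ) ≤ y) : (#S : ℝ) ≤ y := by
  have hsubset : S ⊆ Ioc 0 ⌊y⌋₊ := fun n hn => mem_Ioc.2 ⟨(hS n hn).1, Nat.le_floor (hS n hn).2⟩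
  have hcard : #S ≤ ⌊y⌋₊ := by simpa using card_le_card hsubset
  exact (Nat.cast_le.2 hcard).trans (Nat.floor_le hy)

theorem sqrt_le_div_log_rpow {t : ℝ} (ht : 1 < t) :
    √t ≤ 3 ^ ((3 : ℝ) / 2) * (t / (log t) ^ ((3 : ℝ) / 2)) := by
  have ht₀ : 0 < t := by linarith
  have hlog : 0 < log t := Real.log_pos ht
  have hcuberoot : log t ≤ 3 * t ^ ((1 : ℝ) / 3) := by
    have := Real.log_le_rpow_div ht₀.le (ε := 1 / 3) (by norm_num)
    linarith
  rw [← mul_div_assoc, le_div_iff₀ (by positivity)]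
  calc √t * (log t) ^ ((3 : ℝ) / 2) ≤ √t * (3 * t ^ ((1 : ℝ) / 3)) ^ ((3 : ℝ) / 2) := by gcongr
    _ = 3 ^ ((3 : ℝ) / 2) * (√t * √t) := by
        rw [Real.mul_rpow (by norm_num) (by positivity), ← Real.rpow_mul ht₀.le, Real.sqrt_eq_rpow]
        norm_num
        ring
    _ = 3 ^ ((3 : ℝ) / 2) * t := by rw [Real.mul_self_sqrt ht₀.le]

/-- The error term of the theorem, against which all counts below are measured. -/
noncomputable def errorTerm (x t : ℝ) : ℝ :=
  log x / log (log x) + t / (log t) ^ ((3 : ℝ) / 2) + t / (log t * log (log x))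

theorem log_log_pos_of_exp_one_lt {x : ℝ} (hx : exp 1 < x) : 0 < log (log x) :=
  Real.log_pos ((Real.lt_log_iff_exp_lt ((Real.exp_pos 1).trans hx)).2 hx)

theorem exp_log_log_of_exp_one_lt {x : ℝ} (hx : exp 1 < x) : exp (log (log x)) = log x :=
  Real.exp_log (Real.log_pos ((Real.one_lt_exp_iff.2 one_pos).trans hx))

theorem log_div_log_log_le_errorTerm {x t : ℝ} (hx : exp 1 < x) (ht : 2 ≤ t) :
    log x / log (log x) ≤ errorTerm x t := by
  have := log_log_pos_of_exp_one_lt hx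
  have : 0 < log t := Real.log_pos (by linarith)
  rw [errorTerm, add_assoc]
  exact le_add_of_nonneg_right (by positivity)

theorem div_log_rpow_le_errorTerm {x t : ℝ} (hx : exp 1 < x) (ht : 2 ≤ t) :
    t / (log t) ^ ((3 : ℝ) / 2) ≤ errorTerm x t := by
  have := log_log_pos_of_exp_one_lt hx
  have : 0 < log x := exp_log_log_of_exp_one_lt hx ▸ Real.exp_pos _
  have : 0 < log t := Real.log_pos (by linarith)
  rw [errorTerm, add_right_comm]
  exact le_add_of_nonneg_left (by positivity)

theorem div_log_mul_log_log_le_errorTerm {x t : ℝ} (hx : exp 1 < x) (ht : 2 ≤ t) :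
    t / (log t * log (log x)) ≤ errorTerm x t := by
  have := log_log_pos_of_exp_one_lt hx
  have : 0 < log x := exp_log_log_of_exp_one_lt hx ▸ Real.exp_pos _
  have : 0 < log t := Real.log_pos (by linarith)
  exact le_add_of_nonneg_left (by positivity)

/-- The primes `p` with `P x p` are rare if at most `O(errorTerm x t)` of them do not exceed `t`,
uniformly in `x` and `t`. -/
def IsRare (P : ℝ → ℕ → Prop) : Prop :=
  ∃ C : ℝ, 0 < C ∧ ∀ x : ℝ, exp 1 < x → ∀ t : ℝ, 2 ≤ t →
    (#{p ∈ Nat.primesLE ⌊t⌋₊ | P x p} : ℝ) ≤ C * errorTerm x t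

theorem errorTerm_nonneg {x t : ℝ} (hx : exp 1 < x) (ht : 2 ≤ t) : 0 ≤ errorTerm x t := by
  have : 0 < log t := Real.log_pos (by linarith)
  exact le_trans (by positivity) (div_log_rpow_le_errorTerm hx ht)

theorem IsRare.mono {P Q : ℝ → ℕ → Prop} (hQ : IsRare Q)
    (h : ∀ x p, p.Prime → P x p → Q x p) : IsRare P := by
  obtain ⟨C, hC, hQ⟩ := hQ
  refine ⟨C, hC, fun x hx t ht => le_trans ?_ (hQ x hx t ht)⟩
  exact_mod_cast card_le_card fun p hp => by
    obtain ⟨hpt, hPp⟩ := mem_filter.1 hp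
    exact mem_filter.2 ⟨hpt, h x p (Nat.prime_of_mem_primesLE hpt) hPp⟩

theorem IsRare.or {P Q : ℝ → ℕ → Prop} (hP : IsRare P) (hQ : IsRare Q) :
    IsRare fun x p => P x p ∨ Q x p := by
  obtain ⟨C, hC, hP⟩ := hP
  obtain ⟨D, hD, hQ⟩ := hQ
  refine ⟨C + D, by positivity, fun x hx t ht => ?_⟩
  simp only [filter_or, add_mul]
  exact le_trans (by exact_mod_cast card_union_le _ _) (add_le_add (hP x hx t ht) (hQ x hx t ht))

theorem card_le_card_filter_sqrt_lt_add {A : Finset ℕ} {t : ℝ} (ht : 1 < t)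
    (hA : ∀ p ∈ A, 0 < p) :
    (#A : ℝ) ≤
      #(A.filter fun p : ℕ => √t < p) + 3 ^ ((3 : ℝ) / 2) * (t / (log t) ^ ((3 : ℝ) / 2)) := by
  have hsmall : (#(A.filter fun p : ℕ => ¬ √t < p) : ℝ) ≤ √t :=
    card_le_of_forall_le (Real.sqrt_nonneg t) fun p hp =>
      ⟨hA p (mem_filter.1 hp).1, not_lt.1 (mem_filter.1 hp).2⟩
  rw [← card_filter_add_card_filter_not (s := A) fun p : ℕ => √t < p, Nat.cast_add]
  gcongr
  exact hsmall.trans (sqrt_le_div_log_rpow ht)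

theorem isRare_of_sqrt_lt {P : ℝ → ℕ → Prop} {C : ℝ}
    (h : ∀ x, exp 1 < x → ∀ t, 2 ≤ t → ∀ S : Finset ℕ,
      (∀ p ∈ S, p.Prime ∧ √t < p ∧ p ≤ t ∧ P x p) → (#S : ℝ) ≤ C * errorTerm x t) :
    IsRare P := by
  refine ⟨max C 0 + 3 ^ ((3 : ℝ) / 2), by positivity, fun x hx t ht => ?_⟩
  have hA : ∀ p ∈ {p ∈ Nat.primesLE ⌊t⌋₊ | P x p}, p.Prime ∧ p ≤ t ∧ P x p := fun p hp => by
    obtain ⟨hpt, hPp⟩ := mem_filter.1 hp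
    obtain ⟨hpt, hprime⟩ := Nat.mem_primesLE.1 hpt
    exact ⟨hprime, (Nat.le_floor_iff (by linarith)).1 hpt, hPp⟩
  have hlarge := h x hx t ht ({p ∈ Nat.primesLE ⌊t⌋₊ | P x p}.filter fun p : ℕ => √t < p)
    fun p hp => by
      obtain ⟨hpA, hpl⟩ := mem_filter.1 hp
      exact ⟨(hA p hpA).1, hpl, (hA p hpA).2⟩
  calc (#{p ∈ Nat.primesLE ⌊t⌋₊ | P x p} : ℝ)
      ≤ #({p ∈ Nat.primesLE ⌊t⌋₊ | P x p}.filter fun p : ℕ => √t < p) +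
          3 ^ ((3 : ℝ) / 2) * (t / (log t) ^ ((3 : ℝ) / 2)) :=
        card_le_card_filter_sqrt_lt_add (by linarith) fun p hp => (hA p hp).1.pos
    _ ≤ C * errorTerm x t + 3 ^ ((3 : ℝ) / 2) * errorTerm x t := by
        gcongr
        exact div_log_rpow_le_errorTerm hx ht
    _ ≤ max C 0 * errorTerm x t + 3 ^ ((3 : ℝ) / 2) * errorTerm x t := by
        gcongr
        · exact errorTerm_nonneg hx ht
        · exact le_max_left C 0
    _ = (max C 0 + 3 ^ ((3 : ℝ) / 2)) * errorTerm x t := (add_mul _ _ _).symm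

theorem isRare_of_card_le {P : ℝ → ℕ → Prop} {C : ℝ} (hC : 0 < C)
    (h : ∀ x, exp 1 < x → ∀ S : Finset ℕ, (∀ p ∈ S, p.Prime ∧ P x p) →
      (#S : ℝ) ≤ C * (log x / log (log x))) :
    IsRare P := by
  refine ⟨C, hC, fun x hx t ht => ?_⟩
  calc (#{p ∈ Nat.primesLE ⌊t⌋₊ | P x p} : ℝ) ≤ C * (log x / log (log x)) :=
        h x hx _ fun p hp => by
          obtain ⟨hpt, hPp⟩ := mem_filter.1 hp
          exact ⟨Nat.prime_of_mem_primesLE hpt, hPp⟩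
    _ ≤ C * errorTerm x t := by gcongr; exact log_div_log_log_le_errorTerm hx ht

theorem isRare_dvd {n : ℤ} (hn : n ≠ 0) : IsRare fun _ p => (p : ℤ) ∣ n := by
  refine isRare_of_card_le (C := #n.natAbs.primeFactors + 1) (by positivity) fun x hx S hS => ?_
  have hξ := log_log_pos_of_exp_one_lt hx
  have hone : 1 ≤ log x / log (log x) := by
    rw [one_le_div hξ]
    exact Real.log_le_self (exp_log_log_of_exp_one_lt hx ▸ Real.exp_nonneg _)
  have hsubset : S ⊆ n.natAbs.primeFactors := fun p hp =>
    Nat.mem_primeFactors.2 ⟨(hS p hp).1, Int.natCast_dvd.1 (hS p hp).2, Int.natAbs_ne_zero.2 hn⟩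
  calc (#S : ℝ) ≤ #n.natAbs.primeFactors + 1 := by
        exact_mod_cast (card_le_card hsubset).trans (Nat.le_succ _)
    _ ≤ (#n.natAbs.primeFactors + 1) * (log x / log (log x)) :=
        le_mul_of_one_le_right (by positivity) hone

theorem isRare_le_log_log : IsRare fun x p => (p : ℝ) ≤ log (log x) := by
  refine isRare_of_card_le two_pos fun x hx S hS => ?_
  have hξ := log_log_pos_of_exp_one_lt hx
  calc (#S : ℝ) ≤ log (log x) :=
        card_le_of_forall_le hξ.le fun p hp => ⟨(hS p hp).1.pos, (hS p hp).2⟩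
    _ ≤ 2 * (log x / log (log x)) := by
        rw [← mul_div_assoc, le_div_iff₀ hξ, ← exp_log_log_of_exp_one_lt hx]
        simp only [Real.log_exp]
        nlinarith [Real.quadratic_le_exp_of_nonneg hξ.le]

theorem isRare_not_squarefree_roughPart :
    IsRare fun x p => ¬ Squarefree (roughPart (log (log x)) (p - 1)) :=
  isRare_of_sqrt_lt (C := 80 * log 4) fun x hx t ht S hS =>
    (card_not_squarefree_roughPart_le (by linarith) (log_log_pos_of_exp_one_lt hx) hS).trans <| by
      gcongr
      exact div_log_mul_log_log_le_errorTerm hx ht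

theorem le_two_mul_log_div_log_log {x t : ℝ} (hx : exp 1 < x) (ht : 0 < t)
    (htx : 2 * log t < log (log x)) : t ≤ 2 * (log x / log (log x)) := by
  have hξ := log_log_pos_of_exp_one_lt hx
  calc t = exp (log t) := (Real.exp_log ht).symm
    _ ≤ exp (log (log x) / 2) := by gcongr; linarith
    _ = exp (log (log x)) / exp (log (log x) / 2) := by rw [← Real.exp_sub]; ring_nf
    _ ≤ exp (log (log x)) / (log (log x) / 2) := by
        gcongr
        linarith [Real.add_one_le_exp (log (log x) / 2)]
    _ = 2 * (log x / log (log x)) := by rw [exp_log_log_of_exp_one_lt hx]; ring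

theorem isRare_exp_sqrt_log_lt_smoothPart :
    IsRare fun x p => exp (√(log p)) < smoothPart (log (log x)) (p - 1) := by
  refine isRare_of_sqrt_lt (C := exp 338 * 720 + 2) fun x hx t ht S hS => ?_
  have herr := errorTerm_nonneg hx ht
  rcases le_or_gt (log (log x)) (2 * log t) with hxt | hxt
  · calc (#S : ℝ) ≤ exp 338 * 720 * (t / (log t) ^ ((3 : ℝ) / 2)) :=
          card_exp_sqrt_log_lt_smoothPart_le (by linarith) (log_log_pos_of_exp_one_lt hx).le hxt hS
      _ ≤ exp 338 * 720 * errorTerm x t := by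
          gcongr
          exact div_log_rpow_le_errorTerm hx ht
      _ ≤ (exp 338 * 720 + 2) * errorTerm x t := by
          gcongr
          linarith
  · calc (#S : ℝ) ≤ t :=
          card_le_of_forall_le (by linarith) fun p hp => ⟨(hS p hp).1.pos, (hS p hp).2.2.1⟩
      _ ≤ 2 * (log x / log (log x)) := le_two_mul_log_div_log_log hx (by linarith) hxt
      _ ≤ 2 * errorTerm x t := by
          gcongr
          exact log_div_log_log_le_errorTerm hx ht
      _ ≤ (exp 338 * 720 + 2) * errorTerm x t := by
          gcongr
          linarith [Real.exp_pos 338]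

theorem rpow_three_halves_log_le {t r : ℝ} (ht : 2 ≤ t) (hr₁ : 1 ≤ r) (hr₂ : r ≤ 2) :
    (log t) ^ ((3 : ℝ) / 2) ≤ 4 * (log t) ^ (1 + 1 / r) := by
  have hlog : 1 / 4 ≤ log t := by
    have := Real.log_le_log two_pos ht
    have := Real.log_two_gt_d9
    linarith
  have hlog₀ : 0 < log t := by linarith
  have hr_inv₁ : 1 / r ≤ 1 := (div_le_one (by linarith)).2 hr₁
  have hr_inv₂ : 1 / 2 ≤ 1 / r := one_div_le_one_div_of_le (by linarith) hr₂
  have hgap : 1 / 4 ≤ (log t) ^ (1 / r - 1 / 2) := by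
    calc (1 / 4 : ℝ) = (1 / 4) ^ (1 : ℝ) := (Real.rpow_one _).symm
      _ ≤ (1 / 4) ^ (1 / r - 1 / 2) :=
          Real.rpow_le_rpow_of_exponent_ge (by norm_num) (by norm_num) (by linarith)
      _ ≤ (log t) ^ (1 / r - 1 / 2) := by gcongr
  rw [show 1 + 1 / r = 3 / 2 + (1 / r - 1 / 2) by ring, Real.rpow_add hlog₀]
  nlinarith [Real.rpow_pos_of_pos hlog₀ (3 / 2)]

theorem isRare_natCard_closure_le {ι : Type*} [Fintype ι] [Nonempty ι] (hι : Fintype.card ι ≤ 2)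
    {a : ι → ℤ} (ha : ∀ i, a i ≠ 0) (hind : MultIndep a) :
    IsRare fun _ p => (Nat.card (Submonoid.closure (Set.range fun i => (a i : ZMod p))) : ℝ) ≤
      (p : ℝ) ^ (Fintype.card ι / (Fintype.card ι + 1) : ℝ) / log p := by
  set r := Fintype.card ι
  set B := 4 * 3 ^ r * (∑ i, ((a i).natAbs : ℝ) + 1)
  have hr : (1 : ℝ) ≤ r := Nat.one_le_cast.2 Fintype.card_pos
  have hdvd : IsRare fun _ p => (p : ℤ) ∣ ∏ i, a i :=
    isRare_dvd (prod_ne_zero_iff.2 fun i _ => ha i)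
  have hnotdvd : IsRare fun _ p => (∀ i, ¬ (p : ℤ) ∣ a i) ∧
      (Nat.card (Submonoid.closure (Set.range fun i => (a i : ZMod p))) : ℝ) ≤
        (p : ℝ) ^ (r / (r + 1) : ℝ) / log p := by
    refine isRare_of_sqrt_lt (C := B * 4) fun x hx t ht S hS => ?_
    have hlog : 0 < log t := Real.log_pos (by linarith)
    calc (#S : ℝ) ≤ B * (t / (log t) ^ (1 + 1 / (r : ℝ))) :=
          card_primes_natCard_closure_le_rpow_div_log ha hind (by linarith) hS
      _ ≤ B * (4 * (t / (log t) ^ ((3 : ℝ) / 2))) := by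
          gcongr
          rw [← mul_div_assoc, div_le_div_iff₀ (by positivity) (by positivity)]
          nlinarith [rpow_three_halves_log_le ht hr (by exact_mod_cast hι)]
      _ ≤ B * 4 * errorTerm x t := by
          rw [mul_assoc B]
          gcongr B * (4 * ?_)
          exact div_log_rpow_le_errorTerm hx ht
  refine (hdvd.or hnotdvd).mono fun _ p _ hcard => ?_
  by_cases hp : ∃ i, (p : ℤ) ∣ a i
  · obtain ⟨i, hi⟩ := hp
    exact Or.inl (hi.trans (dvd_prod_of_mem a (mem_univ i)))
  · exact Or.inr ⟨not_exists.1 hp, hcard⟩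

theorem isRare_orderOf_le {a : ℤ} (ha : a ≠ 0) (hind : ∀ m : ℤ, (a : ℚ) ^ m = 1 → m = 0) :
    IsRare fun _ p => (orderOf (a : ZMod p) : ℝ) ≤ (p : ℝ) ^ ((1 : ℝ) / 2) / log p := by
  have hfamily : MultIndep fun _ : Unit => a := fun e he =>
    funext fun i => hind (e i) (by simpa using he)
  refine ((isRare_dvd ha).or (isRare_natCard_closure_le (by simp) (fun _ => ha) hfamily)).mono
    fun _ p hp hord => ?_
  by_cases hpa : (p : ℤ) ∣ a
  · exact Or.inl hpa
  have : Fact p.Prime := ⟨hp⟩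
  have hunit : IsUnit (a : ZMod p) :=
    isUnit_iff_ne_zero.2 fun h => hpa ((ZMod.intCast_zmod_eq_zero_iff_dvd a p).1 h)
  refine Or.inr ?_
  rw [Set.range_const, ← Submonoid.powers_eq_closure, Fintype.card_unit, Nat.cast_one,
    one_add_one_eq_two]
  refine le_trans ?_ hord
  exact_mod_cast (isOfFinOrder_iff_isUnit.2 hunit).natCard_powers_le_orderOf

theorem isRare_ellPair_le {a b : ℤ} (ha : a ≠ 0) (hb : b ≠ 0)
    (hind : ∀ m n : ℤ, (a : ℚ) ^ m * (b : ℚ) ^ n = 1 → m = 0 ∧ n = 0) :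
    IsRare fun _ p => (ellPair a b p : ℝ) ≤ (p : ℝ) ^ ((2 : ℝ) / 3) / log p := by
  have hfamily : MultIndep ![a, b] := fun e he => by
    obtain ⟨h₀, h₁⟩ := hind (e 0) (e 1) (by simpa [Fin.prod_univ_two] using he)
    ext i
    fin_cases i <;> assumption
  refine (isRare_natCard_closure_le (by simp) (Fin.forall_fin_two.2 ⟨ha, hb⟩) hfamily).mono
    fun _ p _ hell => ?_
  have hrange : (Set.range fun i => ((![a, b] i : ℤ) : ZMod p)) = {(a : ZMod p), (b : ZMod p)} := by
    ext; simp [Fin.exists_fin_two, eq_comm]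
  rw [hrange, Fintype.card_fin]
  norm_num at hell ⊢
  exact hell

theorem natCard_le_card_filter_primesLE {s : Set ℕ} {P : ℕ → Prop} {t : ℝ}
    (hs : ∀ p ∈ s, p.Prime ∧ P p ∧ p ≤ t) : Nat.card s ≤ #{p ∈ Nat.primesLE ⌊t⌋₊ | P p} := by
  have hsubset : s ⊆ ({p ∈ Nat.primesLE ⌊t⌋₊ | P p} : Finset ℕ) := fun p hp =>
    mem_filter.2 ⟨Nat.mem_primesLE.2 ⟨Nat.le_floor (hs p hp).2.2, (hs p hp).1⟩, (hs p hp).2.1⟩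
  rw [← Set.ncard_coe_finset]
  exact Set.ncard_le_ncard hsubset

end

theorem stmt_18_general (a b : ℤ) (ha : a ≠ 0) (hb : b ≠ 0)
    (hind : ∀ m n : ℤ, (a : ℚ) ^ m * (b : ℚ) ^ n = 1 → m = 0 ∧ n = 0) :
    ∃ C : ℝ, 0 < C ∧ ∀ x : ℝ, Real.exp 1 < x → ∀ t : ℝ, 2 ≤ t →
      (((Nat.primesLE ⌊t⌋₊).filter (UCond a b x)).card : ℝ)
        ≤ C * (Real.log x / Real.log (Real.log x)
            + t / (Real.log t) ^ ((3 : ℝ) / 2)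
            + t / (Real.log t * Real.log (Real.log x))) :=
  (isRare_dvd (mul_ne_zero ha hb)).or <| isRare_le_log_log.or <|
    isRare_exp_sqrt_log_lt_smoothPart.or <| isRare_not_squarefree_roughPart.or <|
    (isRare_orderOf_le ha fun m hm => (hind m 0 (by simpa using hm)).1).or <|
    (isRare_orderOf_le hb fun n hn => (hind 0 n (by simpa using hn)).2).or <|
    isRare_ellPair_le ha hb hind

/-- **Lemma (bound for `π_U(t)`).** For `a, b` nonzero multiplicatively independent
integers and all large `x`, uniformly for `2 ≤ t ≤ x`, the number of primes `p ≤ t`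
in `U(x)` is `O(log x/log log x + t/(log t)^(3/2) + t/(log t · log log x))`. -/
theorem stmt_18 (a b : ℤ) (ha : a ≠ 0) (hb : b ≠ 0)
    (hind : ∀ m n : ℤ, (a : ℚ) ^ m * (b : ℚ) ^ n = 1 → m = 0 ∧ n = 0) :
    ∃ C : ℝ, 0 < C ∧ ∃ x₀ : ℝ, ∀ x : ℝ, 16 ≤ x → x₀ ≤ x →
      ∀ t : ℝ, 2 ≤ t → t ≤ x →
        (Nat.card {p : ℕ | Nat.Prime p ∧ (p : ℝ) ≤ x ∧ UCond a b x p ∧ (p : ℝ) ≤ t} : ℝ)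
          ≤ C * (Real.log x / Real.log (Real.log x)
              + t / (Real.log t) ^ ((3 : ℝ) / 2)
              + t / (Real.log t * Real.log (Real.log x))) := by
  obtain ⟨C, hC, hcard⟩ := stmt_18_general a b ha hb hind
  exact ⟨C, hC, 16, fun x hx _ t ht _ => le_trans
    (Nat.cast_le.2 <| natCard_le_card_filter_primesLE fun p hp => ⟨hp.1, hp.2.2⟩)
    (hcard x (by linarith [Real.exp_one_lt_three]) t ht)⟩
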